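/- arXiv:1912.00140 — 2 statements merged into one kernel-verified Lean document; each statement's English description precedes it below -/
import Mathlib

section
/- 2·∑_{n=1}^∞ 4^{n-1} / (n² · C(2n,n)) = π²/4 + log²2 + (1/2)·∑_{n=1}^∞ (C(2n,n)/(4ⁿ · n²))·(2 + 2n(H_{n-1} - H_{2n-1})), where both series converge. -/
/-!
Write `a n = C(2n, n) / 4 ^ n`, so that `A = ∑ a n Xⁿ = (1 - X) ^ (-1/2)`, and put
`U = ∑_{n ≥ 1} (a n / n) Xⁿ` and `Z = ∑ a n / (2 n + 1) Xⁿ`. First-order differential equations give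
the coefficients of `U A`, `U²`, `Z A` and `Z²`. They show that the series on the left of the
theorem is `Z(1)² / 2`, the coefficient sum of `Z²` halved, and the one on the right `-U(1)² / 2`.

To evaluate `U(1)` and `Z(1)`, note that `A² = 1 / (1 - X)`, so the partial sums of the coefficients
of `p` are the coefficients of `(p A) A`. If `p A = ∑ a n h n Xⁿ`, these are averages of `h` with
weights `a k * a (n - k)`, and by Toeplitz's theorem they tend to `lim h`. For `U` this limit is
`lim 2 (H_{2n} - H_n) = 2 log 2`, for `Z` it is the limit `π / 2` of the Wallis product.
-/

open Filter Topology Finset PowerSeries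

section Toeplitz

variable {ι E : Type*} {l : Filter ι} [NormedAddCommGroup E] [NormedSpace ℝ E]

lemma tendsto_sum_smul_of_tendsto_zero {s : ι → Finset ℕ} {w : ι → ℕ → ℝ}
    (hw_nonneg : ∀ i k, 0 ≤ w i k) (hw_sum : ∀ i, ∑ k ∈ s i, w i k ≤ 1)
    (hw_lim : ∀ k, Tendsto (w · k) l (𝓝 0)) {h : ℕ → E} (hh : Tendsto h atTop (𝓝 0)) :
    Tendsto (fun i ↦ ∑ k ∈ s i, w i k • h k) l (𝓝 0) := by
  refine Metric.tendsto_nhds.2 fun ε hε ↦ ?_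
  obtain ⟨K, hK⟩ := Metric.tendsto_atTop.1 hh (ε / 2) (half_pos hε)
  have head_lim : Tendsto (fun i ↦ ∑ k ∈ range K, w i k * ‖h k‖) l (𝓝 0) := by
    simpa only [zero_mul, sum_const_zero] using
      tendsto_finsetSum (range K) fun k _ ↦ (hw_lim k).mul_const ‖h k‖
  filter_upwards [head_lim.eventually_lt_const (half_pos hε)] with i head_lt
  have term_nonneg (k : ℕ) : 0 ≤ w i k * ‖h k‖ := mul_nonneg (hw_nonneg i k) (norm_nonneg _)
  have head_le : ∑ k ∈ s i with k < K, w i k * ‖h k‖ ≤ ∑ k ∈ range K, w i k * ‖h k‖ :=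
    sum_le_sum_of_subset_of_nonneg (fun k hk ↦ mem_range.2 (mem_filter.1 hk).2)
      fun k _ _ ↦ term_nonneg k
  have tail_le : ∑ k ∈ s i with ¬k < K, w i k * ‖h k‖ ≤ ε / 2 :=
    calc ∑ k ∈ s i with ¬k < K, w i k * ‖h k‖
        ≤ ∑ k ∈ s i with ¬k < K, w i k * (ε / 2) := by
          refine sum_le_sum fun k hk ↦ mul_le_mul_of_nonneg_left ?_ (hw_nonneg i k)
          simpa only [dist_zero_right] using (hK k (not_lt.1 (mem_filter.1 hk).2)).le
      _ ≤ ∑ k ∈ s i, w i k * (ε / 2) :=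
          sum_le_sum_of_subset_of_nonneg (filter_subset _ _) fun k _ _ ↦
            mul_nonneg (hw_nonneg i k) (half_pos hε).le
      _ = (∑ k ∈ s i, w i k) * (ε / 2) := (sum_mul ..).symm
      _ ≤ ε / 2 := mul_le_of_le_one_left (half_pos hε).le (hw_sum i)
  rw [dist_zero_right]
  calc ‖∑ k ∈ s i, w i k • h k‖
      ≤ ∑ k ∈ s i, w i k * ‖h k‖ :=
        norm_sum_le_of_le _ fun k _ ↦ (norm_smul_of_nonneg (hw_nonneg i k) _).le
    _ = (∑ k ∈ s i with k < K, w i k * ‖h k‖) + ∑ k ∈ s i with ¬k < K, w i k * ‖h k‖ :=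
        (sum_filter_add_sum_filter_not ..).symm
    _ < ε / 2 + ε / 2 := add_lt_add_of_lt_of_le (head_le.trans_lt head_lt) tail_le
    _ = ε := add_halves ε

lemma tendsto_sum_smul_of_tendsto {s : ι → Finset ℕ} {w : ι → ℕ → ℝ}
    (hw_nonneg : ∀ i k, 0 ≤ w i k) (hw_sum : ∀ i, ∑ k ∈ s i, w i k = 1)
    (hw_lim : ∀ k, Tendsto (w · k) l (𝓝 0)) {h : ℕ → E} {c : E} (hh : Tendsto h atTop (𝓝 c)) :
    Tendsto (fun i ↦ ∑ k ∈ s i, w i k • h k) l (𝓝 c) := by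
  have sub_lim := tendsto_sum_smul_of_tendsto_zero hw_nonneg (fun i ↦ (hw_sum i).le) hw_lim
    (tendsto_sub_nhds_zero_iff.2 hh)
  refine tendsto_sub_nhds_zero_iff.1 (sub_lim.congr fun i ↦ ?_)
  simp only [smul_sub, sum_sub_distrib, ← sum_smul, hw_sum, one_smul]

end Toeplitz

section Coefficients

variable {R : Type*}

lemma coeff_X_mul_derivative [CommSemiring R] (f : R⟦X⟧) (n : ℕ) :
    coeff n (X * d⁄dX R f) = n * coeff n f := by
  cases n with
  | zero => simp
  | succ n => rw [coeff_succ_X_mul, coeff_derivative, Nat.cast_succ, mul_comm]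

lemma coeff_mul_eq_sum_range [Semiring R] (f g : R⟦X⟧) (n : ℕ) :
    coeff n (f * g) = ∑ k ∈ range (n + 1), coeff k f * coeff (n - k) g := by
  rw [coeff_mul, Nat.sum_antidiagonal_eq_sum_range_succ fun i j ↦ coeff i f * coeff j g]

lemma coeff_mul_mk_one [Semiring R] (f : R⟦X⟧) (n : ℕ) :
    coeff n (f * PowerSeries.mk 1) = ∑ k ∈ range (n + 1), coeff k f := by
  simp only [coeff_mul_eq_sum_range, coeff_mk, Pi.one_apply, mul_one]

lemma hasSum_coeff_mul [NormedRing R] [CompleteSpace R] {f g : R⟦X⟧}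
    (hf : Summable fun n ↦ ‖coeff n f‖) (hg : Summable fun n ↦ ‖coeff n g‖) :
    HasSum (fun n ↦ coeff n (f * g)) ((∑' n, coeff n f) * ∑' n, coeff n g) := by
  simp only [coeff_mul]
  rw [tsum_mul_tsum_eq_tsum_sum_antidiagonal_of_summable_norm hf hg]
  exact (summable_norm_sum_mul_antidiagonal_of_summable_norm hf hg).of_norm.hasSum

lemma hasSum_coeff_sq {f : ℝ⟦X⟧} {c : ℝ} (hf : HasSum (fun n ↦ coeff n f) c) :
    HasSum (fun n ↦ coeff n (f ^ 2)) (c ^ 2) := by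
  simpa only [sq, hf.tsum_eq] using hasSum_coeff_mul hf.summable.norm hf.summable.norm

end Coefficients

section NormCentralBinom

/-- The central binomial coefficient normalised by its exponential growth rate. -/
noncomputable def normCentralBinom (n : ℕ) : ℝ := n.centralBinom / 4 ^ n

lemma normCentralBinom_zero : normCentralBinom 0 = 1 := by simp [normCentralBinom]

lemma normCentralBinom_pos (n : ℕ) : 0 < normCentralBinom n :=
  div_pos (Nat.cast_pos.2 n.centralBinom_pos) (by positivity)

lemma normCentralBinom_succ (n : ℕ) :
    normCentralBinom (n + 1) = (2 * n + 1) / (2 * n + 2) * normCentralBinom n := by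
  have centralBinom_rec : ((n : ℝ) + 1) * (n + 1).centralBinom = 2 * (2 * n + 1) * n.centralBinom :=
    mod_cast n.succ_mul_centralBinom_succ
  unfold normCentralBinom
  field_simp
  linear_combination 2 * 4 ^ n * centralBinom_rec

lemma wallis_eq_inv_normCentralBinom_sq (n : ℕ) :
    Real.Wallis.W n = ((2 * n + 1) * normCentralBinom n ^ 2)⁻¹ := by
  induction n with
  | zero => simp [Real.Wallis.W, normCentralBinom_zero]
  | succ n ih =>
    have := normCentralBinom_pos n
    rw [Real.Wallis.W_succ, ih, normCentralBinom_succ]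
    push_cast
    field_simp
    ring

lemma tendsto_normCentralBinom : Tendsto normCentralBinom atTop (𝓝 0) := by
  have odd_atTop : Tendsto (fun n : ℕ ↦ 2 * (n : ℝ) + 1) atTop atTop :=
    tendsto_atTop_add_const_right _ _ (tendsto_natCast_atTop_atTop.const_mul_atTop two_pos)
  have inv_wallis_lim := Real.Wallis.tendsto_W_nhds_pi_div_two.inv₀ Real.pi_div_two_pos.ne'
  have sq_lim : Tendsto (fun n ↦ normCentralBinom n ^ 2) atTop (𝓝 0) := by
    refine (inv_wallis_lim.div_atTop odd_atTop).congr fun n ↦ ?_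
    rw [wallis_eq_inv_normCentralBinom_sq]
    field_simp
  simpa only [Real.sqrt_sq (normCentralBinom_pos _).le, Real.sqrt_zero] using sq_lim.sqrt

/-- The generating function `(1 - X) ^ (-1/2)` of `normCentralBinom`. -/
noncomputable def normCentralBinomSeries : ℝ⟦X⟧ := mk normCentralBinom

local notation "A" => normCentralBinomSeries

lemma two_mul_one_sub_X_mul_derivative_normCentralBinomSeries :
    2 * (1 - X) * d⁄dX ℝ A = A := by
  have expand : 2 * (1 - X) * d⁄dX ℝ A = C 2 * (d⁄dX ℝ A - X * d⁄dX ℝ A) := by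
    simp only [map_ofNat]
    ring
  ext n
  rw [expand, coeff_C_mul, map_sub, coeff_X_mul_derivative, coeff_derivative]
  simp only [normCentralBinomSeries, coeff_mk, normCentralBinom_succ]
  field_simp
  ring

lemma normCentralBinomSeries_sq_mul_one_sub_X : A ^ 2 * (1 - X) = 1 := by
  refine derivative.ext (R := ℝ) ?_ (by simp [normCentralBinomSeries, normCentralBinom_zero])
  simp only [Derivation.leibniz, derivative_pow, map_sub, derivative_one, derivative_X, smul_eq_mul]
  linear_combination A * two_mul_one_sub_X_mul_derivative_normCentralBinomSeries

lemma normCentralBinomSeries_sq : A ^ 2 = PowerSeries.mk 1 := by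
  linear_combination PowerSeries.mk 1 * normCentralBinomSeries_sq_mul_one_sub_X -
    A ^ 2 * mk_one_mul_one_sub_eq_one ℝ

lemma sum_normCentralBinom_mul (n : ℕ) :
    ∑ k ∈ range (n + 1), normCentralBinom k * normCentralBinom (n - k) = 1 := by
  simpa only [sq, coeff_mul_eq_sum_range, normCentralBinomSeries, coeff_mk, Pi.one_apply] using
    congrArg (coeff n) normCentralBinomSeries_sq

lemma tendsto_sum_range_coeff_of_mul_normCentralBinomSeries {p : ℝ⟦X⟧} {h : ℕ → ℝ} {c : ℝ}
    (hp : p * A = mk fun n ↦ normCentralBinom n * h n) (hh : Tendsto h atTop (𝓝 c)) :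
    Tendsto (fun n ↦ ∑ k ∈ range n, coeff k p) atTop (𝓝 c) := by
  have average_lim : Tendsto (fun n ↦ ∑ k ∈ range (n + 1),
      (normCentralBinom k * normCentralBinom (n - k)) • h k) atTop (𝓝 c) := by
    refine tendsto_sum_smul_of_tendsto
      (fun n k ↦ mul_nonneg (normCentralBinom_pos k).le (normCentralBinom_pos _).le)
      sum_normCentralBinom_mul (fun k ↦ ?_) hh
    simpa only [mul_zero, Function.comp_apply] using
      (tendsto_normCentralBinom.comp (tendsto_sub_atTop_nat k)).const_mul (normCentralBinom k)
  refine (tendsto_add_atTop_iff_nat 1).1 (average_lim.congr fun n ↦ ?_)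
  rw [← coeff_mul_mk_one, ← normCentralBinomSeries_sq, sq, ← mul_assoc, hp, coeff_mul_eq_sum_range]
  simp only [normCentralBinomSeries, coeff_mk, smul_eq_mul, mul_right_comm]

lemma hasSum_coeff_of_mul_normCentralBinomSeries {p : ℝ⟦X⟧} {h : ℕ → ℝ} {c : ℝ}
    (hp_nonneg : ∀ n, 0 ≤ coeff n p) (hp : p * A = mk fun n ↦ normCentralBinom n * h n)
    (hh : Tendsto h atTop (𝓝 c)) : HasSum (fun n ↦ coeff n p) c :=
  (hasSum_iff_tendsto_nat_of_nonneg hp_nonneg c).2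
    (tendsto_sum_range_coeff_of_mul_normCentralBinomSeries hp hh)

section ArcsinSeries

/-- The power series of `arcsin (√x) / √x`. -/
noncomputable def arcsinSeries : ℝ⟦X⟧ := mk fun n ↦ normCentralBinom n / (2 * n + 1)

local notation "Z" => arcsinSeries

lemma eq_arcsinSeries_iff {f : ℝ⟦X⟧} : f = Z ↔ 2 * (X * d⁄dX ℝ f) + f = A := by
  have coeff_lhs (n : ℕ) : coeff n (2 * (X * d⁄dX ℝ f) + f) = (2 * n + 1) * coeff n f := by
    rw [two_mul, map_add, map_add, coeff_X_mul_derivative]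
    ring
  simp only [PowerSeries.ext_iff, coeff_lhs, arcsinSeries, normCentralBinomSeries, coeff_mk]
  refine forall_congr' fun n ↦ ?_
  rw [eq_div_iff (by positivity), mul_comm]

lemma arcsinSeries_mul_normCentralBinomSeries :
    Z * A = mk fun n ↦ ((2 * n + 1) * normCentralBinom n)⁻¹ := by
  set Y : ℝ⟦X⟧ := mk fun n ↦ ((2 * n + 1) * normCentralBinom n)⁻¹ with hY
  have Y_ode : 2 * X * (1 - X) * d⁄dX ℝ Y + (1 - 2 * X) * Y = 1 := by
    have expand : 2 * X * (1 - X) * d⁄dX ℝ Y + (1 - 2 * X) * Y =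
        C 2 * (X * d⁄dX ℝ Y - X * (X * d⁄dX ℝ Y)) + (Y - C 2 * (X * Y)) := by
      simp only [map_ofNat]
      ring
    rw [expand]
    ext n
    cases n with
    | zero => simp [hY, normCentralBinom_zero]
    | succ n =>
      have := normCentralBinom_pos n
      simp only [map_add, map_sub, coeff_C_mul, coeff_succ_X_mul, coeff_derivative,
        coeff_X_mul_derivative, hY, coeff_mk, normCentralBinom_succ, coeff_one, Nat.succ_ne_zero,
        if_false]
      push_cast
      field_simp
      ring
  have A_ode := two_mul_one_sub_X_mul_derivative_normCentralBinomSeries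
  -- As `A² (1 - X) = 1`, the claim `Z A = Y` is equivalent to `Z = Y A (1 - X)`.
  have Z_eq : Y * A * (1 - X) = Z := by
    rw [eq_arcsinSeries_iff]
    simp only [Derivation.leibniz, map_sub, derivative_one, derivative_X, smul_eq_mul]
    linear_combination A * Y_ode + X * Y * A_ode
  linear_combination -A * Z_eq + Y * normCentralBinomSeries_sq_mul_one_sub_X

lemma coeff_arcsinSeries_sq (n : ℕ) :
    coeff n (Z ^ 2) = (2 * (n + 1) ^ 2 * normCentralBinom (n + 1))⁻¹ := by
  have sq_ode : X * d⁄dX ℝ (Z ^ 2) + Z ^ 2 = Z * A := by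
    simp only [derivative_pow]
    linear_combination Z * eq_arcsinSeries_iff.1 rfl
  have coeff_ode := congrArg (coeff n) sq_ode
  rw [arcsinSeries_mul_normCentralBinomSeries, map_add, coeff_X_mul_derivative, coeff_mk]
    at coeff_ode
  have := normCentralBinom_pos n
  rw [normCentralBinom_succ, ← mul_right_inj' (n.cast_add_one_ne_zero (R := ℝ)), add_one_mul,
    coeff_ode]
  field_simp

lemma hasSum_coeff_arcsinSeries : HasSum (fun n ↦ coeff n Z) (Real.pi / 2) := by
  refine hasSum_coeff_of_mul_normCentralBinomSeries (fun n ↦ ?_) ?_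
    Real.Wallis.tendsto_W_nhds_pi_div_two
  · have := normCentralBinom_pos n
    rw [arcsinSeries, coeff_mk]
    positivity
  · rw [arcsinSeries_mul_normCentralBinomSeries]
    ext n
    have := normCentralBinom_pos n
    rw [coeff_mk, coeff_mk, wallis_eq_inv_normCentralBinom_sq]
    field_simp

end ArcsinSeries

section LogSeries

/-- The power series of `2 log (2 / (1 + √(1 - x)))`. Its constant coefficient is `1 / 0 = 0`. -/
noncomputable def logSeries : ℝ⟦X⟧ := mk fun n ↦ normCentralBinom n / n

local notation "U" => logSeries

lemma eq_logSeries_iff {f : ℝ⟦X⟧} :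
    f = U ↔ constantCoeff f = 0 ∧ X * d⁄dX ℝ f = A - 1 := by
  rw [← coeff_zero_eq_constantCoeff_apply, PowerSeries.ext_iff, PowerSeries.ext_iff,
    ← Nat.and_forall_add_one, ← Nat.and_forall_add_one (p := fun n ↦ coeff n (X * _) = _)]
  simp only [logSeries, normCentralBinomSeries, coeff_X_mul_derivative, map_sub, coeff_one,
    coeff_mk, Nat.cast_zero, div_zero, zero_mul, normCentralBinom_zero, if_true, sub_self,
    Nat.succ_ne_zero, if_false, sub_zero, true_and]
  refine and_congr_right' (forall_congr' fun n ↦ ?_)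
  rw [eq_div_iff (Nat.cast_ne_zero.2 n.succ_ne_zero), mul_comm]

lemma harmonic_two_mul_succ_sub (n : ℕ) :
    (harmonic (2 * (n + 1)) - harmonic (n + 1) : ℝ) =
      harmonic (2 * n) - harmonic n + 1 / ((2 * n + 1) * (2 * n + 2)) := by
  rw [Nat.mul_succ, harmonic_succ, harmonic_succ, harmonic_succ]
  push_cast
  field_simp
  ring

lemma tendsto_harmonic_two_mul_sub_harmonic :
    Tendsto (fun n ↦ (harmonic (2 * n) - harmonic n : ℝ)) atTop (𝓝 (Real.log 2)) := by
  have gamma_lim := Real.tendsto_harmonic_sub_log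
  have two_mul_atTop : Tendsto (fun n : ℕ ↦ 2 * n) atTop atTop :=
    tendsto_id.const_mul_atTop' two_pos
  have log_lim := ((gamma_lim.comp two_mul_atTop).sub gamma_lim).add_const (Real.log 2)
  rw [sub_self, zero_add] at log_lim
  refine log_lim.congr' ?_
  filter_upwards [eventually_ne_atTop 0] with n hn
  rw [Function.comp_apply, Nat.cast_mul, Nat.cast_ofNat,
    Real.log_mul two_ne_zero (Nat.cast_ne_zero.2 hn)]
  ring

lemma logSeries_mul_normCentralBinomSeries :
    U * A = mk fun n ↦ normCentralBinom n * (2 * (harmonic (2 * n) - harmonic n)) := by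
  set Y : ℝ⟦X⟧ := mk fun n ↦ normCentralBinom n * (2 * (harmonic (2 * n) - harmonic n)) with hY
  have Y_ode : 2 * X * (1 - X) * d⁄dX ℝ Y - X * Y = 2 - 2 * (1 - X) * A := by
    have expand : 2 * X * (1 - X) * d⁄dX ℝ Y - X * Y - (2 - 2 * (1 - X) * A) =
        C 2 * (X * d⁄dX ℝ Y - X * (X * d⁄dX ℝ Y) + A - X * A - 1) - X * Y := by
      simp only [map_ofNat]
      ring
    rw [← sub_eq_zero, expand]
    ext n
    cases n with
    | zero => simp [hY, normCentralBinomSeries, normCentralBinom_zero]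
    | succ n =>
      simp only [map_add, map_sub, map_zero, coeff_C_mul, coeff_succ_X_mul, coeff_derivative,
        coeff_X_mul_derivative, hY, normCentralBinomSeries, coeff_mk, normCentralBinom_succ,
        harmonic_two_mul_succ_sub, coeff_one, Nat.succ_ne_zero, if_false]
      field_simp
      ring
  have A_ode := two_mul_one_sub_X_mul_derivative_normCentralBinomSeries
  have U_eq : Y * A * (1 - X) = U := by
    have C_two_ne_zero : C (2 : ℝ) ≠ 0 := (map_ne_zero_iff C C_injective).2 two_ne_zero
    refine eq_logSeries_iff.2 ⟨by simp [hY], mul_left_cancel₀ C_two_ne_zero ?_⟩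
    simp only [map_ofNat, Derivation.leibniz, map_sub, derivative_one, derivative_X, smul_eq_mul]
    linear_combination A * Y_ode + X * Y * A_ode - 2 * normCentralBinomSeries_sq_mul_one_sub_X
  linear_combination -A * U_eq + Y * normCentralBinomSeries_sq_mul_one_sub_X

lemma coeff_logSeries_sq (n : ℕ) :
    coeff n (U ^ 2) =
      normCentralBinom n * (4 * (harmonic (2 * n) - harmonic n) / n - 2 / n ^ 2) := by
  obtain ⟨U_zero, U_ode⟩ := eq_logSeries_iff.1 (rfl : U = U)
  cases n with
  | zero => simp [U_zero]
  | succ n =>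
    have sq_ode : X * d⁄dX ℝ (U ^ 2) = C 2 * (U * A - U) := by
      simp only [derivative_pow, map_ofNat]
      linear_combination 2 * U * U_ode
    have coeff_ode := congrArg (coeff (n + 1)) sq_ode
    rw [coeff_X_mul_derivative, coeff_C_mul, logSeries_mul_normCentralBinomSeries, map_sub,
      coeff_mk, logSeries, coeff_mk, ← logSeries] at coeff_ode
    rw [← mul_right_inj' (n.cast_add_one_ne_zero (R := ℝ)), ← Nat.cast_succ, coeff_ode]
    field_simp
    ring

lemma hasSum_coeff_logSeries : HasSum (fun n ↦ coeff n U) (2 * Real.log 2) := by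
  refine hasSum_coeff_of_mul_normCentralBinomSeries (fun n ↦ ?_)
    logSeries_mul_normCentralBinomSeries (tendsto_harmonic_two_mul_sub_harmonic.const_mul 2)
  rw [logSeries, coeff_mk]
  exact div_nonneg (normCentralBinom_pos n).le n.cast_nonneg

end LogSeries

end NormCentralBinom

lemma hasSum_inv_centralBinom_div_sq :
    HasSum (fun n : ℕ ↦ (4 : ℝ) ^ n / (((n : ℝ) + 1) ^ 2 * (Nat.centralBinom (n + 1) : ℝ)))
      (Real.pi ^ 2 / 8) := by
  convert! (hasSum_coeff_sq hasSum_coeff_arcsinSeries).div_const 2 using 1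
  · ext n
    have := (n + 1).centralBinom_ne_zero
    rw [coeff_arcsinSeries_sq, normCentralBinom]
    field_simp
    ring
  · ring

lemma hasSum_centralBinom_div_sq_mul_harmonic_sub :
    HasSum (fun n : ℕ ↦
        (Nat.centralBinom (n + 1) : ℝ) / ((4 : ℝ) ^ (n + 1) * ((n : ℝ) + 1) ^ 2) *
          (2 + 2 * ((n : ℝ) + 1) * ((harmonic n : ℝ) - (harmonic (2 * n + 1) : ℝ))))
      (-2 * Real.log 2 ^ 2) := by
  have shifted := (hasSum_nat_add_iff' 1).2 (hasSum_coeff_sq hasSum_coeff_logSeries)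
  convert! shifted.mul_left (-1 / 2) using 1
  · ext n
    rw [coeff_logSeries_sq, Nat.mul_succ, harmonic_succ (2 * n + 1), harmonic_succ n,
      normCentralBinom]
    push_cast
    field_simp
    ring
  · simp only [sum_range_one, coeff_logSeries_sq, Nat.cast_zero, div_zero, ne_eq,
      OfNat.ofNat_ne_zero, not_false_eq_true, zero_pow, sub_self, mul_zero]
    ring

/-- 2·∑_{n=1}^∞ 4^{n-1}/(n²·C(2n,n)) = π²/4 + log²2
+ (1/2)·∑_{n=1}^∞ (C(2n,n)/(4ⁿ·n²))·(2 + 2n(H_{n-1} - H_{2n-1})), both series converging. -/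
theorem inverse_centralBinom_nsq_identity :
    Summable (fun n : ℕ =>
      (4 : ℝ) ^ n / (((n : ℝ) + 1) ^ 2 * (Nat.centralBinom (n + 1) : ℝ))) ∧
    Summable (fun n : ℕ =>
      (Nat.centralBinom (n + 1) : ℝ) / ((4 : ℝ) ^ (n + 1) * ((n : ℝ) + 1) ^ 2) *
        (2 + 2 * ((n : ℝ) + 1) * ((harmonic n : ℝ) - (harmonic (2 * n + 1) : ℝ)))) ∧
    2 * ∑' n : ℕ, (4 : ℝ) ^ n / (((n : ℝ) + 1) ^ 2 * (Nat.centralBinom (n + 1) : ℝ)) =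
      Real.pi ^ 2 / 4 + Real.log 2 ^ 2 +
        (1 / 2) * ∑' n : ℕ,
          (Nat.centralBinom (n + 1) : ℝ) / ((4 : ℝ) ^ (n + 1) * ((n : ℝ) + 1) ^ 2) *
            (2 + 2 * ((n : ℝ) + 1) * ((harmonic n : ℝ) - (harmonic (2 * n + 1) : ℝ))) := by
  refine ⟨hasSum_inv_centralBinom_div_sq.summable,
    hasSum_centralBinom_div_sq_mul_harmonic_sub.summable, ?_⟩
  rw [hasSum_inv_centralBinom_div_sq.tsum_eq, hasSum_centralBinom_div_sq_mul_harmonic_sub.tsum_eq]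
  ring
end

section
/- 2·∑_{n=1}^∞ 4^{n-1} / (n⁴ · C(2n,n)) = -(1/240)·π⁴ + (1/6)·π²·log²2 + log⁴2 + (1/2)·∑_{n=1}^∞ (C(2n,n)/(4ⁿ · n⁴))·(4 + 2n(H_{n-1} - H_{2n-1})), where both series converge. -/
/-!
Write `wₙ = C(2n,n)/4ⁿ`. The Beta function `β(a) = ∑ wₘ/(m+a)` satisfies
`(a + 1/2) β(a+1) = a β(a)`, hence `β(n) = 1/(n wₙ)` at positive integers and `β(j+1/2) = π wⱼ` at
half-integers, where `β(1/2) = π` is Wallis' product. In the series on the right, write the harmonic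
difference as a tail of `∑ (1/(j+1/2) - 1/(j+1))` and sum over the outer index first, by partial
fractions: the values of `β` at integers produce the series on the left, those at half-integers
produce `∑ wⱼ/(j+1/2)³`, and the rest are products of the power sums `∑ wₙ/nᵏ` with the values at
`1/2` of `Λ(a) = ∑ (1/(j+a) - 1/(j+a+1/2))` and its derivatives. Since `β' = -β Λ`, Newton's
identities express all sums involving `w` through those values, that is, through `log 2`, `ζ(2)`,
`ζ(3)` and `ζ(4)`.
-/

open Filter Topology Finset

section Telescoping

theorem hasSum_sub_succ_of_summable {G : Type*} [AddCommGroup G] [TopologicalSpace G]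
    [IsTopologicalAddGroup G] [T2Space G] {u : ℕ → G} {l : G} (hu : Tendsto u atTop (𝓝 l))
    (hs : Summable fun n ↦ u n - u (n + 1)) : HasSum (fun n ↦ u n - u (n + 1)) (u 0 - l) := by
  rw [hs.hasSum_iff_tendsto_nat]
  simpa only [sum_range_sub'] using tendsto_const_nhds.sub hu

theorem hasSum_sub_succ_of_antitone {u : ℕ → ℝ} {l : ℝ} (hu : Tendsto u atTop (𝓝 l))
    (hanti : Antitone u) : HasSum (fun n ↦ u n - u (n + 1)) (u 0 - l) := by
  rw [hasSum_iff_tendsto_nat_of_nonneg fun n ↦ sub_nonneg.2 (hanti n.le_succ)]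
  simpa only [sum_range_sub'] using tendsto_const_nhds.sub hu

end Telescoping

section ShiftedPowers

theorem tendsto_one_div_natCast_add_pow (a : ℝ) {s : ℕ} (hs : s ≠ 0) :
    Tendsto (fun n : ℕ ↦ 1 / ((n : ℝ) + a) ^ s) atTop (𝓝 0) := by
  simp_rw [one_div]
  exact ((tendsto_pow_atTop hs).comp
    (tendsto_atTop_add_const_right _ a tendsto_natCast_atTop_atTop)).inv_tendsto_atTop

theorem summable_one_div_natCast_add_pow (a : ℝ) {s : ℕ} (hs : 1 < s) :
    Summable fun n : ℕ ↦ 1 / ((n : ℝ) + a) ^ s := by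
  have h := (Real.summable_one_div_nat_add_rpow a s).2 (by exact_mod_cast hs)
  refine .of_norm (h.congr fun n ↦ ?_)
  rw [Real.rpow_natCast, norm_div, norm_pow, norm_one, Real.norm_eq_abs]

theorem hasDerivAt_one_div_add_pow {𝕜 : Type*} [NontriviallyNormedField 𝕜] (c : 𝕜) {a : 𝕜}
    (h : c + a ≠ 0) (k : ℕ) :
    HasDerivAt (fun x ↦ 1 / (c + x) ^ (k + 1)) (-(k + 1) * (1 / (c + a) ^ (k + 2))) a := by
  have hpow := ((hasDerivAt_id a).const_add c).pow (k + 1)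
  convert! hpow.inv (pow_ne_zero _ h) using 1
  · ext x; simp [one_div]
  · simp only [id, Nat.add_sub_cancel, Pi.pow_apply]
    push_cast
    field_simp
    ring

theorem hasDerivAt_tsum_of_abs_le_div_pow {f f' : ℕ → ℝ → ℝ} {C : ℝ} {s : ℕ} (hs : 1 < s)
    (hsum : ∀ a, 0 < a → Summable fun m ↦ f m a)
    (hf : ∀ m a, 0 < a → HasDerivAt (f m) (f' m a) a)
    (hf' : ∀ m a, 0 < a → |f' m a| ≤ C / ((m : ℝ) + a) ^ s) {a : ℝ} (ha : 0 < a) :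
    HasDerivAt (fun x ↦ ∑' m, f m x) (∑' m, f' m a) a := by
  have hC : 0 ≤ C := by
    have := (abs_nonneg _).trans (hf' 0 a ha)
    rw [le_div_iff₀ (by positivity)] at this
    simpa using this
  have hmem : a ∈ Set.Ioi (a / 2) := half_lt_self ha
  have hpos : ∀ y ∈ Set.Ioi (a / 2), 0 < y := fun y hy ↦ (half_pos ha).trans hy
  refine hasDerivAt_tsum_of_isPreconnected (u := fun m : ℕ ↦ C * (1 / ((m : ℝ) + a / 2) ^ s))
    ((summable_one_div_natCast_add_pow (a / 2) hs).mul_left C) isOpen_Ioi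
    isPreconnected_Ioi (fun m y hy ↦ hf m y (hpos y hy)) (fun m y hy ↦ ?_) hmem (hsum a ha) hmem
  rw [Real.norm_eq_abs, mul_one_div]
  refine (hf' m y (hpos y hy)).trans ?_
  have : a / 2 ≤ y := le_of_lt hy
  gcongr

end ShiftedPowers

section NewtonIdentities

theorem succ_mul_sum_antidiagonal_succ {R : Type*} [CommSemiring R] (f g : ℕ → R) (k : ℕ) :
    (k + 1) * ∑ p ∈ antidiagonal (k + 1), f p.1 * g p.2 =
      ∑ p ∈ antidiagonal k,
        ((p.1 + 1) * f (p.1 + 1) * g p.2 + f p.1 * ((p.2 + 1) * g (p.2 + 1))) := by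
  calc (k + 1) * ∑ p ∈ antidiagonal (k + 1), f p.1 * g p.2
    _ = ∑ p ∈ antidiagonal (k + 1), p.1 * f p.1 * g p.2 +
        ∑ p ∈ antidiagonal (k + 1), f p.1 * (p.2 * g p.2) := by
      rw [mul_sum, ← sum_add_distrib]
      refine sum_congr rfl fun p hp ↦ ?_
      have : (p.1 : R) + p.2 = k + 1 := by
        exact_mod_cast congrArg (Nat.cast (R := R)) (mem_antidiagonal.1 hp)
      rw [← this]
      ring
    _ = _ := by
      rw [Nat.sum_antidiagonal_succ, Nat.sum_antidiagonal_succ', sum_add_distrib]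
      simp

theorem succ_mul_eq_sum_antidiagonal_of_hasDerivAt {𝕜 : Type*} [NontriviallyNormedField 𝕜]
    [CharZero 𝕜] {s : Set 𝕜} (hs : IsOpen s) {F G : ℕ → 𝕜 → 𝕜}
    (hF : ∀ k, ∀ a ∈ s, HasDerivAt (F k) (-(k + 1) * F (k + 1) a) a)
    (hG : ∀ k, ∀ a ∈ s, HasDerivAt (G k) (-(k + 1) * G (k + 1) a) a)
    (h : ∀ a ∈ s, F 1 a = F 0 a * G 0 a) (k : ℕ) :
    ∀ a ∈ s, (k + 1) * F (k + 1) a = ∑ p ∈ antidiagonal k, F p.1 a * G p.2 a := by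
  induction k with
  | zero => simpa using h
  | succ k ih =>
    intro a ha
    have hleft := (hF (k + 1) a ha).const_mul ((k : 𝕜) + 1)
    have hright := HasDerivAt.fun_sum fun p (_ : p ∈ antidiagonal k) ↦
      (hF p.1 a ha).mul (hG p.2 a ha)
    have hderiv := hleft.unique <| hright.congr_of_eventuallyEq <|
      (hs.eventually_mem ha).mono fun x hx ↦ by simpa using ih x hx
    have hneg : -((k + 1) * ((k + 2) * F (k + 2) a)) =
        -((k + 1) * ∑ p ∈ antidiagonal (k + 1), F p.1 a * G p.2 a) := by
      rw [succ_mul_sum_antidiagonal_succ (F · a) (G · a), ← sum_neg_distrib]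
      push_cast at hderiv
      convert! hderiv using 1
      · ring_nf
      · exact sum_congr rfl fun p _ ↦ by ring
    have hk : (k : 𝕜) + 1 ≠ 0 := Nat.cast_add_one_ne_zero k
    have := mul_left_cancel₀ hk (neg_injective hneg)
    push_cast
    linear_combination this

end NewtonIdentities

section WallisRatio

/-- The normalized central binomial coefficient `C(2n,n)/4ⁿ`, which is also the `n`-th coefficient
of the power series of `(1 - x)^(-1/2)`. -/
noncomputable def wallisRatio (n : ℕ) : ℝ :=
  n.centralBinom / 4 ^ n

theorem wallisRatio_zero : wallisRatio 0 = 1 := by simp [wallisRatio]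

theorem wallisRatio_pos (n : ℕ) : 0 < wallisRatio n := by
  have := n.centralBinom_pos
  unfold wallisRatio
  positivity

theorem succ_mul_wallisRatio_succ (n : ℕ) :
    2 * ((n : ℝ) + 1) * wallisRatio (n + 1) = (2 * n + 1) * wallisRatio n := by
  have h : ((n : ℝ) + 1) * (n + 1).centralBinom = 2 * (2 * n + 1) * n.centralBinom := by
    exact_mod_cast n.succ_mul_centralBinom_succ
  unfold wallisRatio
  rw [pow_succ]
  field_simp
  linear_combination 2 * h

theorem wallisRatio_succ (n : ℕ) :
    wallisRatio (n + 1) = (2 * n + 1) / (2 * ((n : ℝ) + 1)) * wallisRatio n := by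
  field_simp
  linear_combination succ_mul_wallisRatio_succ n

theorem wallisRatio_sub_succ (n : ℕ) :
    wallisRatio n - wallisRatio (n + 1) = wallisRatio n / ((n : ℝ) + 1) / 2 := by
  field_simp
  linear_combination -succ_mul_wallisRatio_succ n

theorem antitone_wallisRatio : Antitone wallisRatio := by
  refine antitone_nat_of_succ_le fun n ↦ sub_nonneg.1 ?_
  have := wallisRatio_pos n
  rw [wallisRatio_sub_succ]
  positivity

theorem wallisRatio_le_one (n : ℕ) : wallisRatio n ≤ 1 :=
  wallisRatio_zero ▸ antitone_wallisRatio n.zero_le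

theorem mul_wallisRatio_sq_mul_W (n : ℕ) :
    (2 * n + 1) * wallisRatio n ^ 2 * Real.Wallis.W n = 1 := by
  induction n with
  | zero => simp [wallisRatio_zero, Real.Wallis.W]
  | succ n ih =>
    refine Eq.trans ?_ ih
    rw [Real.Wallis.W_succ, wallisRatio_succ]
    push_cast
    field_simp
    ring

theorem tendsto_wallisRatio : Tendsto wallisRatio atTop (𝓝 0) := by
  have hsq (n : ℕ) : wallisRatio n ^ 2 = (Real.Wallis.W n)⁻¹ * (1 / ((n : ℝ) + 1 / 2) ^ 1) / 2 := by
    have := (Real.Wallis.W_pos n).ne'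
    field_simp
    linear_combination mul_wallisRatio_sq_mul_W n
  have hlim : Tendsto (fun n ↦ wallisRatio n ^ 2) atTop (𝓝 0) := by
    simp_rw [hsq]
    simpa using ((Real.Wallis.tendsto_W_nhds_pi_div_two.inv₀ (by positivity)).mul
      (tendsto_one_div_natCast_add_pow (1 / 2) one_ne_zero)).div_const 2
  simpa [Real.sqrt_sq (wallisRatio_pos _).le] using hlim.sqrt

theorem hasSum_wallisRatio_div_succ :
    HasSum (fun m : ℕ ↦ wallisRatio m / ((m : ℝ) + 1)) 2 := by
  have h := (hasSum_sub_succ_of_antitone tendsto_wallisRatio antitone_wallisRatio).mul_left 2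
  simp_rw [wallisRatio_sub_succ, wallisRatio_zero, sub_zero, mul_one] at h
  exact h.congr_fun fun m ↦ by ring

end WallisRatio

section WallisSum

/-- The series `∑ wₘ/(m+a)^(k+1)`, where `wₘ = C(2m,m)/4ᵐ`. For `k = 0` it is the Beta function
`B(a, 1/2)`, and `(-1)ᵏ * wallisSum k a` is the `k`-th Taylor coefficient of that function at
`a`. -/
noncomputable def wallisSum (k : ℕ) (a : ℝ) : ℝ :=
  ∑' m : ℕ, wallisRatio m / ((m : ℝ) + a) ^ (k + 1)

theorem hasSum_wallisSum (k : ℕ) {a : ℝ} (ha : 0 < a) :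
    HasSum (fun m : ℕ ↦ wallisRatio m / ((m : ℝ) + a) ^ (k + 1)) (wallisSum k a) := by
  refine Summable.hasSum <| .of_nonneg_of_le (fun m ↦ ?_) (fun m ↦ ?_)
    (hasSum_wallisRatio_div_succ.summable.mul_left ((1 + 1 / a) / a ^ k))
  · have := wallisRatio_pos m
    positivity
  · have hw := wallisRatio_pos m
    have hbase : 1 / ((m : ℝ) + a) ≤ (1 + 1 / a) / (m + 1) := by
      rw [div_le_div_iff₀ (by positivity) (by positivity)]
      have : (1 + 1 / a) * (m + a) = m + 1 + (m / a + a) := by field_simp; ring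
      rw [this, one_mul]
      exact le_add_of_nonneg_right (by positivity)
    have hpow : 1 / ((m : ℝ) + a) ^ k ≤ 1 / a ^ k := by
      gcongr
      linarith [m.cast_nonneg (α := ℝ)]
    calc wallisRatio m / ((m : ℝ) + a) ^ (k + 1)
      _ = wallisRatio m * (1 / ((m : ℝ) + a)) * (1 / ((m : ℝ) + a) ^ k) := by
        rw [pow_succ]; field_simp
      _ ≤ wallisRatio m * ((1 + 1 / a) / (m + 1)) * (1 / a ^ k) := by gcongr
      _ = (1 + 1 / a) / a ^ k * (wallisRatio m / (m + 1)) := by ring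

theorem wallisSum_pos (k : ℕ) {a : ℝ} (ha : 0 < a) : 0 < wallisSum k a := by
  have hpos (m : ℕ) : 0 < wallisRatio m / ((m : ℝ) + a) ^ (k + 1) := by
    have := wallisRatio_pos m
    positivity
  exact (hasSum_wallisSum k ha).summable.tsum_pos (fun m ↦ (hpos m).le) 0 (hpos 0)

theorem antitoneOn_wallisSum (k : ℕ) : AntitoneOn (wallisSum k) (Set.Ioi 0) := by
  intro a ha b hb hab
  refine hasSum_le (fun m ↦ ?_) (hasSum_wallisSum k hb) (hasSum_wallisSum k ha)
  have := wallisRatio_pos m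
  have : 0 < a := ha
  gcongr

theorem hasDerivAt_wallisSum (k : ℕ) {a : ℝ} (ha : 0 < a) :
    HasDerivAt (wallisSum k) (-(k + 1) * wallisSum (k + 1) a) a := by
  have hbound (m : ℕ) (x : ℝ) (hx : 0 < x) :
      |wallisRatio m * (-(k + 1) * (1 / ((m : ℝ) + x) ^ (k + 2)))| ≤
        (k + 1) / ((m : ℝ) + x) ^ (k + 2) := by
    have hw := wallisRatio_pos m
    rw [neg_mul, mul_neg, abs_neg, abs_of_nonneg (by positivity), mul_one_div]
    exact mul_le_of_le_one_left (by positivity) (wallisRatio_le_one m)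
  have h := hasDerivAt_tsum_of_abs_le_div_pow (s := k + 2) (by lia)
    (fun x hx ↦ (hasSum_wallisSum k hx).summable.congr fun m ↦ (mul_one_div _ _).symm)
    (fun m x hx ↦ (hasDerivAt_one_div_add_pow (m : ℝ) (by positivity) k).const_mul _)
    hbound ha
  convert! h using 1
  · ext x; simp only [wallisSum, mul_one_div]
  · rw [wallisSum, ← tsum_mul_left]
    exact tsum_congr fun m ↦ by ring

theorem wallisSum_zero_add_one {a : ℝ} (ha : 0 < a) :
    (a + 1 / 2) * wallisSum 0 (a + 1) = a * wallisSum 0 a := by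
  set u : ℕ → ℝ := fun m ↦ m * wallisRatio m / (m + a)
  have hu : Tendsto u atTop (𝓝 0) := by
    refine squeeze_zero (fun m ↦ ?_) (fun m ↦ ?_) tendsto_wallisRatio
    · have := wallisRatio_pos m
      positivity
    · have := wallisRatio_pos m
      rw [div_le_iff₀ (by positivity)]
      nlinarith
  have hstep (m : ℕ) : u m - u (m + 1) =
      (a + 1 / 2) * (wallisRatio m / ((m : ℝ) + (a + 1)) ^ (0 + 1)) -
        a * (wallisRatio m / ((m : ℝ) + a) ^ (0 + 1)) := by
    simp only [u, zero_add, pow_one]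
    have : (m : ℝ) + 1 + a ≠ 0 := by positivity
    rw [show (m : ℝ) + (a + 1) = m + 1 + a by ring]
    push_cast
    field_simp
    linear_combination (-((m : ℝ) + a)) * succ_mul_wallisRatio_succ m
  have hsum := ((hasSum_wallisSum 0 (by positivity : 0 < a + 1)).mul_left (a + 1 / 2)).sub
    ((hasSum_wallisSum 0 ha).mul_left a)
  have htel := hasSum_sub_succ_of_summable hu (hsum.summable.congr fun m ↦ (hstep m).symm)
  simp_rw [hstep] at htel
  simpa [u, sub_eq_zero] using hsum.unique htel

theorem wallisSum_zero_apply_one : wallisSum 0 1 = 2 := by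
  simpa [wallisSum] using hasSum_wallisRatio_div_succ.tsum_eq

theorem wallisSum_zero_natCast_add_one (n : ℕ) :
    wallisSum 0 (n + 1) = 1 / ((n + 1) * wallisRatio (n + 1)) := by
  have hmul : ((n : ℝ) + 1) * wallisRatio (n + 1) * wallisSum 0 (n + 1) = 1 := by
    induction n with
    | zero =>
      have := succ_mul_wallisRatio_succ 0
      simp only [CharP.cast_eq_zero, zero_add, wallisRatio_zero] at this ⊢
      rw [wallisSum_zero_apply_one]
      linear_combination this
    | succ n ih =>
      have h := wallisSum_zero_add_one (a := n + 1) (by positivity)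
      have hw := succ_mul_wallisRatio_succ (n + 1)
      push_cast at hw ⊢
      linear_combination ih + wallisRatio (n + 1) * h + wallisSum 0 (n + 1 + 1) / 2 * hw
  have := wallisRatio_pos (n + 1)
  field_simp
  linear_combination hmul

theorem wallisSum_zero_natCast_add_half_eq_mul (n : ℕ) :
    wallisSum 0 (n + 1 / 2) = wallisRatio n * wallisSum 0 (1 / 2) := by
  induction n with
  | zero => simp [wallisRatio_zero]
  | succ n ih =>
    have h := wallisSum_zero_add_one (a := n + 1 / 2) (by positivity)
    have hw := succ_mul_wallisRatio_succ n
    rw [ih] at h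
    rw [← mul_right_inj' (Nat.cast_add_one_ne_zero (R := ℝ) n)]
    push_cast
    rw [show (n : ℝ) + 1 + 1 / 2 = n + 1 / 2 + 1 by ring]
    linear_combination h - wallisSum 0 (1 / 2) / 2 * hw

theorem wallisSum_zero_half : wallisSum 0 (1 / 2) = Real.pi := by
  have hW (n : ℕ) := mul_wallisRatio_sq_mul_W n
  have hanti {a b : ℝ} (ha : 0 < a) (hab : a ≤ b) : wallisSum 0 b ≤ wallisSum 0 a :=
    antitoneOn_wallisSum 0 ha (ha.trans_le hab) hab
  have hlower (n : ℕ) : 2 * Real.Wallis.W n ≤ wallisSum 0 (1 / 2) := by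
    have hw := wallisRatio_pos n
    have h := hanti (a := n + 1 / 2) (b := n + 1) (by positivity) (by linarith)
    rw [wallisSum_zero_natCast_add_half_eq_mul, wallisSum_zero_natCast_add_one] at h
    refine le_of_mul_le_mul_left (le_trans (le_of_eq ?_) h) hw
    rw [eq_div_iff (by have := wallisRatio_pos (n + 1); positivity)]
    linear_combination hW n + wallisRatio n * Real.Wallis.W n * succ_mul_wallisRatio_succ n
  have hupper (n : ℕ) : wallisSum 0 (1 / 2) ≤
      2 * Real.Wallis.W n * (1 + 1 / ((n : ℝ) + 1 / 2) ^ 1 / 2) := by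
    have hw := wallisRatio_pos n
    have hw' := wallisRatio_pos (n + 1)
    have h := hanti (a := n + 1) (b := (n + 1 : ℕ) + 1 / 2) (by positivity)
      (by push_cast; linarith)
    rw [wallisSum_zero_natCast_add_half_eq_mul, wallisSum_zero_natCast_add_one] at h
    refine le_of_mul_le_mul_left (h.trans (le_of_eq ?_)) hw'
    rw [div_eq_iff (by positivity), wallisRatio_succ]
    refine (hW n).symm.trans ?_
    field_simp
    ring
  have hlim := Real.Wallis.tendsto_W_nhds_pi_div_two.const_mul 2
  have hlim' := hlim.mul
    (((tendsto_one_div_natCast_add_pow (1 / 2) one_ne_zero).div_const 2).const_add 1)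
  have hpi : 2 * (Real.pi / 2) = Real.pi := by ring
  rw [zero_div, add_zero, mul_one, hpi] at hlim'
  rw [hpi] at hlim
  exact le_antisymm (ge_of_tendsto' hlim' hupper) (le_of_tendsto' hlim hlower)

theorem wallisSum_zero_natCast_add_half (n : ℕ) :
    wallisSum 0 (n + 1 / 2) = Real.pi * wallisRatio n := by
  rw [wallisSum_zero_natCast_add_half_eq_mul, wallisSum_zero_half, mul_comm]

end WallisSum

section HalfStepSum

/-- The series `∑ (1/(j+a)^(k+1) - 1/(j+a+1/2)^(k+1))`; up to the sign `(-1)ᵏ`, the `k`-th Taylor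
coefficient at `a` of minus the logarithmic derivative of the Beta function `B(a, 1/2)`. -/
noncomputable def halfStepSum (k : ℕ) (a : ℝ) : ℝ :=
  ∑' j : ℕ, (1 / ((j : ℝ) + a) ^ (k + 1) - 1 / ((j : ℝ) + (a + 1 / 2)) ^ (k + 1))

theorem hasSum_one_div_pow_sub_add_one (k : ℕ) {a : ℝ} (ha : 0 < a) :
    HasSum (fun j : ℕ ↦ 1 / ((j : ℝ) + a) ^ (k + 1) - 1 / ((j : ℝ) + (a + 1)) ^ (k + 1))
      (1 / a ^ (k + 1)) := by
  have hanti : Antitone fun j : ℕ ↦ 1 / ((j : ℝ) + a) ^ (k + 1) := fun i j hij ↦ by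
    dsimp only
    gcongr
  simpa [add_assoc, add_comm (1 : ℝ)] using
    hasSum_sub_succ_of_antitone (tendsto_one_div_natCast_add_pow a k.succ_ne_zero) hanti

theorem hasSum_halfStepSum (k : ℕ) {a : ℝ} (ha : 0 < a) :
    HasSum (fun j : ℕ ↦ 1 / ((j : ℝ) + a) ^ (k + 1) - 1 / ((j : ℝ) + (a + 1 / 2)) ^ (k + 1))
      (halfStepSum k a) := by
  refine Summable.hasSum <| .of_nonneg_of_le (fun j ↦ sub_nonneg.2 ?_)
    (fun j ↦ sub_le_sub_left ?_ _) (hasSum_one_div_pow_sub_add_one k ha).summable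
  · gcongr; linarith
  · gcongr; linarith

theorem halfStepSum_add_half (k : ℕ) {a : ℝ} (ha : 0 < a) :
    halfStepSum k (a + 1 / 2) = 1 / a ^ (k + 1) - halfStepSum k a := by
  have hsum := (hasSum_halfStepSum k ha).add (hasSum_halfStepSum k (by positivity : 0 < a + 1 / 2))
  have := hsum.unique ((hasSum_one_div_pow_sub_add_one k ha).congr_fun fun j ↦ by
    rw [show a + 1 / 2 + 1 / 2 = a + 1 by ring]; ring)
  linarith

theorem halfStepSum_apply_one (k : ℕ) : halfStepSum k 1 = 2 ^ (k + 1) - halfStepSum k (1 / 2) := by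
  simpa [show (2 : ℝ)⁻¹ + 2⁻¹ = 1 by norm_num] using
    halfStepSum_add_half k one_half_pos

theorem hasDerivAt_halfStepSum (k : ℕ) {a : ℝ} (ha : 0 < a) :
    HasDerivAt (halfStepSum k) (-(k + 1) * halfStepSum (k + 1) a) a := by
  have hbound (j : ℕ) (x : ℝ) (hx : 0 < x) :
      |-((k : ℝ) + 1) * (1 / ((j : ℝ) + x) ^ (k + 2)) -
        -((k : ℝ) + 1) * (1 / ((j : ℝ) + (x + 1 / 2)) ^ (k + 2))| ≤
        (k + 1) / ((j : ℝ) + x) ^ (k + 2) := by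
    have hle : 1 / ((j : ℝ) + (x + 1 / 2)) ^ (k + 2) ≤ 1 / ((j : ℝ) + x) ^ (k + 2) := by
      gcongr; linarith
    have hnonneg : 0 ≤ 1 / ((j : ℝ) + (x + 1 / 2)) ^ (k + 2) := by positivity
    rw [← mul_sub, abs_mul, abs_neg, abs_of_nonneg (by positivity),
      abs_of_nonneg (sub_nonneg.2 hle), ← mul_one_div (k + 1 : ℝ)]
    gcongr
    linarith
  have hterm (j : ℕ) {x : ℝ} (hx : 0 < x) :=
    hasDerivAt_one_div_add_pow (j : ℝ) (by positivity : (j : ℝ) + x ≠ 0) k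
  have hderiv (j : ℕ) (x : ℝ) (hx : 0 < x) := (hterm j hx).sub
    ((hterm j (by positivity : 0 < x + 1 / 2)).comp_add_const x (1 / 2))
  have h := hasDerivAt_tsum_of_abs_le_div_pow (s := k + 2) (by lia)
    (fun x hx ↦ (hasSum_halfStepSum k hx).summable) hderiv hbound ha
  convert! h using 1
  rw [halfStepSum, ← tsum_mul_left]
  exact tsum_congr fun j ↦ by ring

theorem halfStepSum_natCast_add (k : ℕ) {a : ℝ} (ha : 0 < a) (n : ℕ) :
    halfStepSum k (n + a) = halfStepSum k a - ∑ j ∈ range n,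
      (1 / ((j : ℝ) + a) ^ (k + 1) - 1 / ((j : ℝ) + (a + 1 / 2)) ^ (k + 1)) := by
  have h := (hasSum_nat_add_iff' n).2 (hasSum_halfStepSum k ha)
  refine (hasSum_halfStepSum k (by positivity)).unique (h.congr_fun fun j ↦ ?_)
  push_cast
  ring

theorem sum_range_half_step_eq_harmonic (n : ℕ) :
    ∑ j ∈ range n, (1 / ((j : ℝ) + 1 / 2) - 1 / ((j : ℝ) + 1)) =
      2 * ((harmonic (2 * n) : ℝ) - harmonic n) := by
  induction n with
  | zero => simp
  | succ n ih =>
    rw [sum_range_succ, ih, show 2 * (n + 1) = 2 * n + 1 + 1 by ring, harmonic_succ,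
      harmonic_succ, harmonic_succ]
    push_cast
    field_simp
    ring

theorem halfStepSum_zero_half : halfStepSum 0 (1 / 2) = 2 * Real.log 2 := by
  have hpartial := (hasSum_halfStepSum 0 one_half_pos).tendsto_sum_nat
  have hharm : Tendsto (fun n : ℕ ↦ (harmonic (2 * n) : ℝ) - harmonic n) atTop
      (𝓝 (Real.log 2)) := by
    have hdouble := Real.tendsto_harmonic_sub_log.comp
      (tendsto_id.const_mul_atTop' (two_pos : 0 < 2))
    have h := (hdouble.sub Real.tendsto_harmonic_sub_log).add_const (Real.log 2)
    rw [sub_self, zero_add] at h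
    refine h.congr' ?_
    filter_upwards [eventually_ne_atTop 0] with n hn
    have : Real.log ((2 * n : ℕ) : ℝ) = Real.log 2 + Real.log n := by
      rw [Nat.cast_mul, Real.log_mul (by norm_num) (by exact_mod_cast hn), Nat.cast_ofNat]
    simp only [Function.comp, id, this]
    ring
  refine tendsto_nhds_unique hpartial ((hharm.const_mul 2).congr fun n ↦ ?_)
  rw [← sum_range_half_step_eq_harmonic]
  norm_num

theorem halfStepSum_zero_natCast_add_half (n : ℕ) :
    halfStepSum 0 (n + 1 / 2) =
      halfStepSum 0 (1 / 2) - 2 * ((harmonic (2 * n) : ℝ) - harmonic n) := by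
  rw [halfStepSum_natCast_add 0 one_half_pos, ← sum_range_half_step_eq_harmonic]
  norm_num

theorem halfStepSum_half_of_hasSum {k : ℕ} {z : ℝ}
    (hz : HasSum (fun n : ℕ ↦ 1 / (n : ℝ) ^ (k + 1)) z) :
    halfStepSum k (1 / 2) = (2 ^ (k + 1) - 2) * z := by
  have hsucc : HasSum (fun n : ℕ ↦ 1 / ((n : ℝ) + (1 / 2 + 1 / 2)) ^ (k + 1)) z := by
    have h := (hasSum_nat_add_iff' 1).2 hz
    simpa [show (2 : ℝ)⁻¹ + 2⁻¹ = 1 by norm_num] using h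
  have heven : HasSum (fun n : ℕ ↦ 1 / ((2 * n : ℕ) : ℝ) ^ (k + 1)) (z / 2 ^ (k + 1)) :=
    (hz.div_const _).congr_fun fun n ↦ by push_cast; rw [mul_pow, div_div, mul_comm]
  have hodd : HasSum (fun n : ℕ ↦ 1 / ((2 * n + 1 : ℕ) : ℝ) ^ (k + 1))
      ((halfStepSum k (1 / 2) + z) / 2 ^ (k + 1)) :=
    (((hasSum_halfStepSum k one_half_pos).add hsucc).div_const _).congr_fun fun n ↦ by
      rw [sub_add_cancel, div_div, ← mul_pow]
      push_cast
      ring_nf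
  have h := hz.unique <|
    heven.even_add_odd (f := fun n : ℕ ↦ 1 / (n : ℝ) ^ (k + 1)) hodd
  field_simp at h
  linear_combination -h

theorem halfStepSum_one_half : halfStepSum 1 (1 / 2) = Real.pi ^ 2 / 3 := by
  rw [halfStepSum_half_of_hasSum hasSum_zeta_two]
  ring

theorem halfStepSum_three_half : halfStepSum 3 (1 / 2) = 7 * Real.pi ^ 4 / 45 := by
  rw [halfStepSum_half_of_hasSum hasSum_zeta_four]
  ring

end HalfStepSum

section LogDeriv

theorem wallisSum_succ_le (k : ℕ) {a : ℝ} (ha : 0 < a) :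
    wallisSum (k + 1) a ≤ wallisSum k a / a := by
  refine hasSum_le (fun m ↦ ?_) (hasSum_wallisSum (k + 1) ha) ((hasSum_wallisSum k ha).div_const a)
  have := wallisRatio_pos m
  rw [pow_succ _ (k + 1), ← div_div]
  gcongr
  exact le_add_of_nonneg_left m.cast_nonneg

theorem wallisSum_one_add_one {a : ℝ} (ha : 0 < a) :
    wallisSum 0 (a + 1) - (a + 1 / 2) * wallisSum 1 (a + 1) =
      wallisSum 0 a - a * wallisSum 1 a := by
  have hleft := ((hasDerivAt_id a).add_const (1 / 2)).mul
    ((hasDerivAt_wallisSum 0 (by positivity : 0 < a + 1)).comp_add_const a 1)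
  have hright := (hasDerivAt_id a).mul (hasDerivAt_wallisSum 0 ha)
  have h := hleft.unique <| hright.congr_of_eventuallyEq <|
    (isOpen_Ioi.eventually_mem ha).mono fun x hx ↦ wallisSum_zero_add_one hx
  simp only [id, CharP.cast_eq_zero, zero_add] at h
  linear_combination h

theorem wallisSum_one_div_zero_sub_add_one {a : ℝ} (ha : 0 < a) :
    wallisSum 1 a / wallisSum 0 a - wallisSum 1 (a + 1) / wallisSum 0 (a + 1) =
      1 / a - 1 / (a + 1 / 2) := by
  have hpos := wallisSum_pos 0 ha
  have hzero : wallisSum 0 (a + 1) = a * wallisSum 0 a / (a + 1 / 2) := by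
    rw [eq_div_iff (by positivity)]
    linear_combination wallisSum_zero_add_one ha
  have hone : wallisSum 1 (a + 1) =
      (wallisSum 0 (a + 1) - wallisSum 0 a + a * wallisSum 1 a) / (a + 1 / 2) := by
    rw [eq_div_iff (by positivity)]
    linear_combination -wallisSum_one_add_one ha
  rw [hone, hzero]
  field_simp
  ring

theorem wallisSum_one_eq_mul {a : ℝ} (ha : 0 < a) :
    wallisSum 1 a = wallisSum 0 a * halfStepSum 0 a := by
  have hpos {x : ℝ} (hx : 0 < x) : 0 < wallisSum 0 x := wallisSum_pos 0 hx
  have hlim : Tendsto (fun n : ℕ ↦ wallisSum 1 (n + a) / wallisSum 0 (n + a)) atTop (𝓝 0) := by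
    refine squeeze_zero (fun n ↦ ?_) (fun n ↦ ?_) (tendsto_one_div_natCast_add_pow a one_ne_zero)
    · exact div_nonneg (wallisSum_pos 1 (by positivity)).le (hpos (by positivity)).le
    · rw [div_le_iff₀ (hpos (by positivity)), pow_one, one_div_mul_eq_div]
      exact wallisSum_succ_le 0 (by positivity)
  have hstep (n : ℕ) : wallisSum 1 (n + a) / wallisSum 0 (n + a) -
      wallisSum 1 ((n + 1 : ℕ) + a) / wallisSum 0 ((n + 1 : ℕ) + a) =
      1 / ((n : ℝ) + a) ^ (0 + 1) - 1 / ((n : ℝ) + (a + 1 / 2)) ^ (0 + 1) := by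
    have h := wallisSum_one_div_zero_sub_add_one (by positivity : 0 < (n : ℝ) + a)
    rw [zero_add, pow_one, pow_one, ← add_assoc, ← h]
    push_cast
    rw [add_right_comm]
  have hsum := hasSum_halfStepSum 0 ha
  have htel := hasSum_sub_succ_of_summable hlim (hsum.summable.congr fun n ↦ (hstep n).symm)
  have hratio := (htel.congr_fun fun n ↦ (hstep n).symm).unique hsum
  simp only [CharP.cast_eq_zero, zero_add, sub_zero] at hratio
  rw [← hratio, mul_div_cancel₀ _ (hpos ha).ne']

theorem wallisSum_newton (k : ℕ) {a : ℝ} (ha : 0 < a) :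
    (k + 1) * wallisSum (k + 1) a =
      ∑ p ∈ antidiagonal k, wallisSum p.1 a * halfStepSum p.2 a :=
  succ_mul_eq_sum_antidiagonal_of_hasDerivAt isOpen_Ioi (fun k _ ↦ hasDerivAt_wallisSum k)
    (fun k _ ↦ hasDerivAt_halfStepSum k) (fun _ ↦ wallisSum_one_eq_mul) k a ha

end LogDeriv

section PowerSums

/-- The series `∑_{n ≥ 1} wₙ/n^(k+1)`, where `wₙ = C(2n,n)/4ⁿ`. -/
noncomputable def wallisPowerSum (k : ℕ) : ℝ :=
  ∑' m : ℕ, wallisRatio (m + 1) / ((m : ℝ) + 1) ^ (k + 1)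

theorem hasSum_wallisRatio_succ_div_pow (k : ℕ) :
    HasSum (fun m : ℕ ↦ wallisRatio (m + 1) / ((m : ℝ) + 1) ^ (k + 1))
      (wallisSum k 1 - wallisSum (k + 1) 1 / 2) := by
  refine ((hasSum_wallisSum k one_pos).sub
    ((hasSum_wallisSum (k + 1) one_pos).div_const 2)).congr_fun fun m ↦ ?_
  rw [wallisRatio_succ]
  field_simp
  ring

theorem wallisPowerSum_eq (k : ℕ) :
    wallisPowerSum k = wallisSum k 1 - wallisSum (k + 1) 1 / 2 :=
  (hasSum_wallisRatio_succ_div_pow k).tsum_eq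

theorem hasSum_wallisPowerSum (k : ℕ) :
    HasSum (fun m : ℕ ↦ wallisRatio (m + 1) / ((m : ℝ) + 1) ^ (k + 1)) (wallisPowerSum k) :=
  (hasSum_wallisRatio_succ_div_pow k).summable.hasSum

theorem wallisPowerSum_zero : wallisPowerSum 0 = halfStepSum 0 (1 / 2) := by
  rw [wallisPowerSum_eq, wallisSum_one_eq_mul one_pos, wallisSum_zero_apply_one,
    halfStepSum_apply_one]
  ring

theorem wallisPowerSum_newton (k : ℕ) :
    (k + 2) * wallisPowerSum (k + 1) = halfStepSum (k + 1) (1 / 2) -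
      ∑ p ∈ antidiagonal k, wallisPowerSum p.1 * halfStepSum p.2 (1 / 2) := by
  let P (n : ℕ) := ∑ p ∈ antidiagonal n, wallisSum p.1 1 * halfStepSum p.2 (1 / 2)
  let T (n : ℕ) := ∑ p ∈ antidiagonal n, wallisSum p.1 1 * 2 ^ (p.2 + 1)
  have hnewton (n : ℕ) : (n + 1) * wallisSum (n + 1) 1 = T n - P n := by
    simp_rw [wallisSum_newton n one_pos, halfStepSum_apply_one, mul_sub, sum_sub_distrib, T, P]
  have hT : T (k + 1) = 2 * wallisSum (k + 1) 1 + 2 * T k := by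
    simp only [T, Nat.sum_antidiagonal_succ', mul_sum]
    congr 1
    · ring
    · exact sum_congr rfl fun p _ ↦ by ring
  have hP : P (k + 1) = 2 * halfStepSum (k + 1) (1 / 2) +
      ∑ p ∈ antidiagonal k, wallisSum (p.1 + 1) 1 * halfStepSum p.2 (1 / 2) := by
    simp only [P, Nat.sum_antidiagonal_succ, wallisSum_zero_apply_one]
  have hsum : ∑ p ∈ antidiagonal k, wallisPowerSum p.1 * halfStepSum p.2 (1 / 2) = P k -
      (∑ p ∈ antidiagonal k, wallisSum (p.1 + 1) 1 * halfStepSum p.2 (1 / 2)) / 2 := by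
    simp only [P, sum_div, ← sum_sub_distrib, wallisPowerSum_eq]
    exact sum_congr rfl fun p _ ↦ by ring
  have hsucc := hnewton (k + 1)
  push_cast at hsucc
  rw [hsum, wallisPowerSum_eq]
  linear_combination -hsucc / 2 - hT / 2 + hP / 2 + hnewton k

-- `halfStepSum 2 (1 / 2) = 6 ζ(3)` is never evaluated: its contributions cancel.
theorem pi_mul_wallisSum_two_half_sub_wallisPowerSum_eq :
    Real.pi * wallisSum 2 (1 / 2) - 3 * wallisPowerSum 3 +
        wallisPowerSum 1 * halfStepSum 1 (1 / 2) - wallisPowerSum 0 * halfStepSum 2 (1 / 2) -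
        halfStepSum 3 (1 / 2) =
      -(1 / 120) * Real.pi ^ 4 + (1 / 3) * Real.pi ^ 2 * Real.log 2 ^ 2 + 2 * Real.log 2 ^ 4 := by
  have h2 := wallisSum_newton 1 one_half_pos
  have hs1 := wallisPowerSum_newton 0
  have hs2 := wallisPowerSum_newton 1
  have hs3 := wallisPowerSum_newton 2
  simp only [Nat.sum_antidiagonal_succ, Nat.antidiagonal_zero, sum_singleton,
    wallisSum_one_eq_mul one_half_pos, wallisSum_zero_half, wallisPowerSum_zero,
    halfStepSum_zero_half, halfStepSum_one_half, halfStepSum_three_half, Nat.cast_zero,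
    Nat.cast_one, Nat.cast_ofNat, zero_add, Nat.reduceAdd] at h2 hs1 hs2 hs3 ⊢
  linear_combination Real.pi / 2 * h2 - 3 / 4 * hs3 + Real.log 2 / 2 * hs2 +
    (7 * Real.pi ^ 2 / 24 - Real.log 2 ^ 2 / 2) * hs1

end PowerSums

section PartialFractions

theorem hasSum_wallisRatio_succ_div_add {c : ℝ} (hc : 0 < c) :
    HasSum (fun m : ℕ ↦ wallisRatio (m + 1) / ((m : ℝ) + 1 + c)) (wallisSum 0 c - 1 / c) := by
  simpa [wallisRatio_zero] using (hasSum_nat_add_iff' 1).2 (hasSum_wallisSum 0 hc)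

theorem hasSum_wallisRatio_succ_div_pow_three_mul {c : ℝ} (hc : 0 < c) :
    HasSum (fun m : ℕ ↦ wallisRatio (m + 1) / ((m : ℝ) + 1) ^ 3 * (1 / ((m : ℝ) + 1 + c)))
      (wallisPowerSum 2 / c - wallisPowerSum 1 / c ^ 2 + wallisPowerSum 0 / c ^ 3 -
        (wallisSum 0 c - 1 / c) / c ^ 3) := by
  refine (((((hasSum_wallisPowerSum 2).div_const c).sub
    ((hasSum_wallisPowerSum 1).div_const (c ^ 2))).add
    ((hasSum_wallisPowerSum 0).div_const (c ^ 3))).sub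
    ((hasSum_wallisRatio_succ_div_add hc).div_const (c ^ 3))).congr_fun fun m ↦ ?_
  have : (m : ℝ) + 1 + c ≠ 0 := by positivity
  field_simp
  ring

end PartialFractions

section Exchange

/-- The term of index `(m, j)` of the double series obtained by expanding `halfStepSum 0` in
`∑ wₙ/n³ * halfStepSum 0 (n + 1/2)`, where `n = m + 1` and `wₙ = C(2n,n)/4ⁿ`. -/
noncomputable def wallisHalfStepTerm (p : ℕ × ℕ) : ℝ :=
  wallisRatio (p.1 + 1) / ((p.1 : ℝ) + 1) ^ 3 *
    (1 / ((p.1 : ℝ) + 1 + (p.2 + 1 / 2)) - 1 / ((p.1 : ℝ) + 1 + (p.2 + 1)))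

theorem summable_wallisHalfStepTerm : Summable wallisHalfStepTerm := by
  have hgap {x : ℝ} (hx : 0 < x) : 1 / x - 1 / (x + 1 / 2) = 1 / (2 * x * (x + 1 / 2)) := by
    field_simp
    ring
  have hdom := (hasSum_wallisPowerSum 2).summable.mul_of_nonneg
    (hasSum_halfStepSum 0 one_half_pos).summable
    (fun m ↦ by have := wallisRatio_pos (m + 1); positivity)
    (fun j ↦ sub_nonneg.2 (by gcongr; linarith))
  refine .of_nonneg_of_le (fun p ↦ ?_) (fun p ↦ ?_) hdom
  · have := wallisRatio_pos (p.1 + 1)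
    refine mul_nonneg (by positivity) (sub_nonneg.2 ?_)
    gcongr
    norm_num
  · have := wallisRatio_pos (p.1 + 1)
    have hle : (p.2 : ℝ) + 1 / 2 ≤ p.1 + 1 + (p.2 + 1 / 2) :=
      le_add_of_nonneg_left (by positivity)
    refine mul_le_mul_of_nonneg_left ?_ (by positivity)
    simp only [zero_add, pow_one]
    rw [show (p.1 : ℝ) + 1 + (p.2 + 1) = p.1 + 1 + (p.2 + 1 / 2) + 1 / 2 by ring,
      ← add_assoc (p.2 : ℝ), hgap (by positivity), hgap (by positivity)]
    gcongr

theorem hasSum_wallisRatio_mul_halfStepSum :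
    HasSum (fun m : ℕ ↦ wallisRatio (m + 1) / ((m : ℝ) + 1) ^ 3 * halfStepSum 0 (m + 1 + 1 / 2))
      (∑' p, wallisHalfStepTerm p) := by
  refine summable_wallisHalfStepTerm.hasSum.prod_fiberwise fun m ↦ ?_
  refine ((hasSum_halfStepSum 0 (by positivity)).mul_left _).congr_fun fun j ↦ ?_
  simp only [wallisHalfStepTerm]
  ring

theorem hasSum_one_div_pow_four_mul_wallisRatio :
    HasSum (fun j : ℕ ↦ 1 / (((j : ℝ) + 1) ^ 4 * wallisRatio (j + 1)))
      (∑' p, wallisHalfStepTerm p - wallisPowerSum 2 * halfStepSum 0 (1 / 2) +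
        wallisPowerSum 1 * halfStepSum 1 (1 / 2) - wallisPowerSum 0 * halfStepSum 2 (1 / 2) -
        halfStepSum 3 (1 / 2) + Real.pi * wallisSum 2 (1 / 2)) := by
  have hcol := (summable_wallisHalfStepTerm.prod_symm.hasSum).prod_fiberwise fun j ↦
    ((hasSum_wallisRatio_succ_div_pow_three_mul (by positivity : 0 < (j : ℝ) + 1 / 2)).sub
      (hasSum_wallisRatio_succ_div_pow_three_mul (by positivity : 0 < (j : ℝ) + 1))).congr_fun
      fun m ↦ mul_sub _ _ _
  have htsum : ∑' p : ℕ × ℕ, wallisHalfStepTerm p.swap = ∑' p, wallisHalfStepTerm p :=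
    (Equiv.prodComm ℕ ℕ).tsum_eq wallisHalfStepTerm
  rw [htsum] at hcol
  have hstep (k : ℕ) := hasSum_halfStepSum k one_half_pos
  refine (((((hcol.sub ((hstep 0).mul_left (wallisPowerSum 2))).add
    ((hstep 1).mul_left (wallisPowerSum 1))).sub
    ((hstep 2).mul_left (wallisPowerSum 0))).sub (hstep 3)).add
    ((hasSum_wallisSum 2 one_half_pos).mul_left Real.pi)).congr_fun fun j ↦ ?_
  rw [wallisSum_zero_natCast_add_half, wallisSum_zero_natCast_add_one]
  have := wallisRatio_pos (j + 1)
  rw [show (1 / 2 + 1 / 2 : ℝ) = 1 by norm_num]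
  field_simp
  ring

end Exchange

section Summands

theorem four_pow_div_centralBinom_eq (n : ℕ) :
    (4 : ℝ) ^ n / (((n : ℝ) + 1) ^ 4 * (Nat.centralBinom (n + 1) : ℝ)) =
      1 / 4 * (1 / (((n : ℝ) + 1) ^ 4 * wallisRatio (n + 1))) := by
  have : ((n + 1).centralBinom : ℝ) ≠ 0 := Nat.cast_ne_zero.2 (n + 1).centralBinom_ne_zero
  rw [wallisRatio, pow_succ (4 : ℝ)]
  field_simp

theorem centralBinom_div_mul_harmonic_eq (n : ℕ) :
    (Nat.centralBinom (n + 1) : ℝ) / ((4 : ℝ) ^ (n + 1) * ((n : ℝ) + 1) ^ 4) *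
        (4 + 2 * ((n : ℝ) + 1) * ((harmonic n : ℝ) - (harmonic (2 * n + 1) : ℝ))) =
      3 * (wallisRatio (n + 1) / ((n : ℝ) + 1) ^ 4) -
        halfStepSum 0 (1 / 2) * (wallisRatio (n + 1) / ((n : ℝ) + 1) ^ 3) +
        wallisRatio (n + 1) / ((n : ℝ) + 1) ^ 3 * halfStepSum 0 (n + 1 + 1 / 2) := by
  have h := halfStepSum_zero_natCast_add_half (n + 1)
  rw [show 2 * (n + 1) = 2 * n + 1 + 1 by ring, harmonic_succ (2 * n + 1), harmonic_succ n] at h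
  push_cast at h
  rw [h, wallisRatio]
  field_simp
  ring

end Summands

/-- 2·∑_{n=1}^∞ 4^{n-1}/(n⁴·C(2n,n)) = -(1/240)·π⁴ + (1/6)·π²·log²2 + log⁴2
+ (1/2)·∑_{n=1}^∞ (C(2n,n)/(4ⁿ·n⁴))·(4 + 2n(H_{n-1} - H_{2n-1})), both series converging. -/
theorem inverse_centralBinom_n4_identity :
    Summable (fun n : ℕ =>
      (4 : ℝ) ^ n / (((n : ℝ) + 1) ^ 4 * (Nat.centralBinom (n + 1) : ℝ))) ∧
    Summable (fun n : ℕ =>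
      (Nat.centralBinom (n + 1) : ℝ) / ((4 : ℝ) ^ (n + 1) * ((n : ℝ) + 1) ^ 4) *
        (4 + 2 * ((n : ℝ) + 1) * ((harmonic n : ℝ) - (harmonic (2 * n + 1) : ℝ)))) ∧
    2 * ∑' n : ℕ, (4 : ℝ) ^ n / (((n : ℝ) + 1) ^ 4 * (Nat.centralBinom (n + 1) : ℝ)) =
      -(1 / 240) * Real.pi ^ 4 + (1 / 6) * Real.pi ^ 2 * Real.log 2 ^ 2 + Real.log 2 ^ 4 +
        (1 / 2) * ∑' n : ℕ,
          (Nat.centralBinom (n + 1) : ℝ) / ((4 : ℝ) ^ (n + 1) * ((n : ℝ) + 1) ^ 4) *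
            (4 + 2 * ((n : ℝ) + 1) * ((harmonic n : ℝ) - (harmonic (2 * n + 1) : ℝ))) := by
  have hleft := hasSum_one_div_pow_four_mul_wallisRatio.mul_left (1 / 4)
  have hright := (((hasSum_wallisPowerSum 3).mul_left 3).sub
    ((hasSum_wallisPowerSum 2).mul_left (halfStepSum 0 (1 / 2)))).add
    hasSum_wallisRatio_mul_halfStepSum
  simp_rw [four_pow_div_centralBinom_eq, centralBinom_div_mul_harmonic_eq]
  refine ⟨hleft.summable, hright.summable, ?_⟩
  rw [hleft.tsum_eq, hright.tsum_eq]
  linear_combination pi_mul_wallisSum_two_half_sub_wallisPowerSum_eq / 2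
end
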